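/- arXiv:0808.1822 — 2 statements merged into one kernel-verified Lean document; each statement's English description precedes it below -/
import Mathlib

section
/- For every n ≥ 2 and every t ≥ 0, the function Ω_n(t) = Γ(n/2)(2/t)^{(n-2)/2} J_{(n-2)/2}(t) (with Ω_n(0)=1) satisfies Ω_n(t) ≥ -1/2. -/
open MeasureTheory Filter Real

noncomputable def besselJ (α : ℝ) (t : ℝ) : ℝ :=
  ∑' k : ℕ, ((-1 : ℝ) ^ k / (k.factorial * Real.Gamma (k + α + 1))) * (t / 2) ^ (2 * (k : ℝ) + α)

noncomputable def Omega (n : ℕ) (t : ℝ) : ℝ :=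
  if t = 0 then 1
  else Real.Gamma (n / 2 : ℝ) * (2 / t) ^ (((n : ℝ) - 2) / 2) * besselJ (((n : ℝ) - 2) / 2) t

noncomputable def upperDensity {n : ℕ} (A : Set (EuclideanSpace ℝ (Fin n))) : ℝ :=
  Filter.limsup
    (fun T : ℝ => (volume (A ∩ {x | ∀ i, |x i| ≤ T})).toReal / (2 * T) ^ n)
    Filter.atTop

def AvoidsDistance {n : ℕ} (A : Set (EuclideanSpace ℝ (Fin n))) (d : ℝ) : Prop :=
  ∀ x ∈ A, ∀ y ∈ A, dist x y ≠ d

namespace SphericalBessel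

/-- The coefficient of `t ^ (2 * k)` in the Maclaurin series of `Omega n`. -/
noncomputable def coeff (n k : ℕ) : ℝ :=
  (-1) ^ k / ∏ i ∈ Finset.range k, ((2 * (i : ℝ) + 2) * (n + 2 * i))

lemma coeff_succ (n k : ℕ) :
    coeff n (k + 1) = -coeff n k / ((2 * (k : ℝ) + 2) * (n + 2 * k)) := by
  rw [coeff, coeff, Finset.prod_range_succ, pow_succ, ← div_div]
  ring

lemma coeff_eq_Gamma {n : ℕ} (hn : 0 < n) (k : ℕ) :
    coeff n k = (-1) ^ k * Real.Gamma (n / 2) / (k.factorial * Real.Gamma (k + n / 2)) / 4 ^ k := by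
  have hn' : (0 : ℝ) < n := by exact_mod_cast hn
  have hΓ := Real.Gamma_pos_of_pos (half_pos hn')
  induction k with
  | zero => simp [coeff, hΓ.ne']
  | succ k ih =>
    have h : (↑(k + 1) : ℝ) + n / 2 = (k + n / 2) + 1 := by push_cast; ring
    have hk := Real.Gamma_pos_of_pos (show (0 : ℝ) < k + n / 2 by positivity)
    rw [coeff_succ, ih, h, Real.Gamma_add_one (by positivity), Nat.factorial_succ]
    push_cast
    field_simp
    ring

lemma Omega_eq_tsum {n : ℕ} (hn : 0 < n) {t : ℝ} (ht : 0 ≤ t) :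
    Omega n t = ∑' k, coeff n k * t ^ (2 * k) := by
  rcases ht.eq_or_lt with rfl | ht
  · rw [Omega, if_pos rfl, tsum_eq_single 0 (by intro k hk; simp [hk])]
    simp [coeff]
  · rw [Omega, if_neg ht.ne', besselJ, ← tsum_mul_left]
    refine tsum_congr fun k => ?_
    have h2 : (0 : ℝ) < t / 2 := by positivity
    have e : (2 / t : ℝ) = (t / 2)⁻¹ := by field_simp
    have e3 : (k : ℝ) + ((n : ℝ) - 2) / 2 + 1 = k + n / 2 := by ring
    have e4 : (t / 2) ^ (2 * (k : ℝ)) = t ^ (2 * k) / 4 ^ k := by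
      rw [show (2 * (k : ℝ)) = ((2 * k : ℕ) : ℝ) by push_cast; ring, Real.rpow_natCast, div_pow,
        pow_mul 2]
      norm_num
    have hp := Real.rpow_pos_of_pos h2 (((n : ℝ) - 2) / 2)
    rw [e, e3, Real.rpow_add h2, e4, Real.inv_rpow h2.le, coeff_eq_Gamma hn]
    field_simp

lemma abs_coeff_le {n : ℕ} (hn : 0 < n) (k : ℕ) : |coeff n k| ≤ 1 / k.factorial := by
  have hn' : (1 : ℝ) ≤ n := by exact_mod_cast hn
  induction k with
  | zero => simp [coeff]
  | succ k ih =>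
    have hk : (0 : ℝ) ≤ k := k.cast_nonneg
    rw [coeff_succ, abs_div, abs_neg,
      abs_of_pos (show 0 < (2 * (k : ℝ) + 2) * (n + 2 * k) by positivity), Nat.factorial_succ,
      mul_comm (k + 1), Nat.cast_mul, ← div_div 1]
    refine div_le_div₀ (by positivity) ih (by positivity) ?_
    push_cast
    nlinarith

lemma norm_coeff_mul_pow_le {n : ℕ} (hn : 0 < n) (k : ℕ) (t : ℝ) :
    ‖coeff n k * t ^ (2 * k)‖ ≤ (t ^ 2) ^ k / k.factorial := by
  rw [norm_mul, Real.norm_eq_abs, Real.norm_eq_abs, pow_mul,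
    abs_of_nonneg (show 0 ≤ (t ^ 2) ^ k by positivity)]
  calc _ ≤ 1 / (k.factorial : ℝ) * (t ^ 2) ^ k := by gcongr; exact abs_coeff_le hn k
    _ = _ := by ring

lemma summable_coeff {n : ℕ} (hn : 0 < n) (t : ℝ) :
    Summable fun k => coeff n k * t ^ (2 * k) :=
  .of_norm_bounded (Real.summable_pow_div_factorial (t ^ 2)) (norm_coeff_mul_pow_le hn · t)

lemma hasSum_Omega {n : ℕ} (hn : 0 < n) {t : ℝ} (ht : 0 ≤ t) :
    HasSum (fun k => coeff n k * t ^ (2 * k)) (Omega n t) :=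
  Omega_eq_tsum hn ht ▸ (summable_coeff hn t).hasSum

lemma coeff_add_two {n : ℕ} (hn : 0 < n) (k : ℕ) :
    coeff (n + 2) k = n * (coeff n k / (n + 2 * k)) := by
  have hn' : (0 : ℝ) < n := by exact_mod_cast hn
  induction k with
  | zero => simp [coeff]; field_simp
  | succ k ih =>
    rw [coeff_succ, coeff_succ, ih]
    push_cast
    field_simp
    ring

lemma hasSum_integral_Omega {n : ℕ} (hn : 0 < n) {t : ℝ} (ht : 0 ≤ t) :
    HasSum (fun k => ∫ s in (0 : ℝ)..1, s ^ (n - 1) * (coeff n k * (t * s) ^ (2 * k)))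
      (∫ s in (0 : ℝ)..1, s ^ (n - 1) * Omega n (t * s)) := by
  refine intervalIntegral.hasSum_integral_of_dominated_convergence
    (fun k _ => (t ^ 2) ^ k / k.factorial) (fun k => ?_) (fun k => ?_) ?_ ?_ ?_
  · exact (by fun_prop : Continuous fun s : ℝ =>
      s ^ (n - 1) * (coeff n k * (t * s) ^ (2 * k))).aestronglyMeasurable
  · refine .of_forall fun s hs => ?_
    rw [Set.uIoc_of_le zero_le_one] at hs
    have hs0 := hs.1.le
    rw [norm_mul, norm_pow, Real.norm_of_nonneg hs0]
    calc _ ≤ 1 * (((t * s) ^ 2) ^ k / k.factorial) := by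
          gcongr
          · exact pow_le_one₀ hs0 hs.2
          · exact norm_coeff_mul_pow_le hn k _
      _ ≤ _ := by
          rw [one_mul]
          gcongr
          exact mul_le_of_le_one_right ht hs.2
  · exact .of_forall fun s _ => Real.summable_pow_div_factorial _
  · simp
  · refine .of_forall fun s hs => ?_
    rw [Set.uIoc_of_le zero_le_one] at hs
    exact (hasSum_Omega hn (mul_nonneg ht hs.1.le)).mul_left _

lemma Omega_add_two {n : ℕ} (hn : 0 < n) {t : ℝ} (ht : 0 ≤ t) :
    Omega (n + 2) t = n * ∫ s in (0 : ℝ)..1, s ^ (n - 1) * Omega n (t * s) := by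
  refine (hasSum_Omega (by omega) ht).unique ?_
  refine HasSum.congr_fun ((hasSum_integral_Omega hn ht).mul_left (n : ℝ)) fun k => ?_
  have h (s : ℝ) : s ^ (n - 1) * (coeff n k * (t * s) ^ (2 * k)) =
      coeff n k * t ^ (2 * k) * s ^ (n - 1 + 2 * k) := by rw [pow_add, mul_pow]; ring
  simp_rw [h]
  rw [intervalIntegral.integral_const_mul, integral_pow, coeff_add_two hn]
  have e : ((n - 1 + 2 * k : ℕ) : ℝ) + 1 = n + 2 * k := by
    rw [← Nat.cast_add_one, show n - 1 + 2 * k + 1 = n + 2 * k by omega]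
    push_cast
    rfl
  rw [e]
  simp
  ring

lemma Omega_continuousOn {n : ℕ} (hn : 0 < n) : ContinuousOn (Omega n) (Set.Ici 0) := by
  refine ContinuousOn.congr (f := fun t => ∑' k, coeff n k * t ^ (2 * k)) ?_
    fun t ht => Omega_eq_tsum hn ht
  refine continuousOn_of_forall_continuousAt fun t _ => ?_
  have hc : ContinuousOn (fun t => ∑' k, coeff n k * t ^ (2 * k)) (Metric.ball 0 (|t| + 1)) := by
    refine continuousOn_tsum (fun k => by fun_prop)
      (Real.summable_pow_div_factorial ((|t| + 1) ^ 2)) fun k s hs => ?_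
    refine (norm_coeff_mul_pow_le hn k s).trans ?_
    rw [mem_ball_zero_iff, Real.norm_eq_abs] at hs
    rw [← sq_abs s]
    gcongr
  exact hc.continuousAt (Metric.isOpen_ball.mem_nhds (by simp))

/-- A lower bound for `Omega n` passes to its radial averages. -/
lemma neg_half_le_Omega_add_two {n : ℕ} (hn : 0 < n) (h : ∀ t, 0 ≤ t → -1 / 2 ≤ Omega n t)
    {t : ℝ} (ht : 0 ≤ t) : -1 / 2 ≤ Omega (n + 2) t := by
  have hn' : (0 : ℝ) < n := by exact_mod_cast hn
  have hi : IntervalIntegrable (fun s : ℝ => s ^ (n - 1) * Omega n (t * s)) volume 0 1 := by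
    refine ContinuousOn.intervalIntegrable (.mul (by fun_prop)
      ((Omega_continuousOn hn).comp (by fun_prop) fun s hs => ?_))
    rw [Set.uIcc_of_le zero_le_one] at hs
    exact mul_nonneg ht hs.1
  have hle : ∫ s in (0 : ℝ)..1, s ^ (n - 1) * (-1 / 2 : ℝ) ≤
      ∫ s in (0 : ℝ)..1, s ^ (n - 1) * Omega n (t * s) := by
    refine intervalIntegral.integral_mono_on zero_le_one
      (Continuous.intervalIntegrable (by fun_prop) _ _) hi fun s hs => ?_
    exact mul_le_mul_of_nonneg_left (h _ (mul_nonneg ht hs.1)) (pow_nonneg hs.1 _)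
  rw [intervalIntegral.integral_mul_const, integral_pow, Nat.cast_pred hn, sub_add_cancel,
    one_pow, zero_pow (by omega), sub_zero] at hle
  rw [Omega_add_two hn ht]
  calc (-1 / 2 : ℝ) = n * (1 / n * (-1 / 2)) := by field_simp
    _ ≤ _ := by gcongr

lemma coeff_three (k : ℕ) : coeff 3 k = (-1) ^ k / (2 * k + 1).factorial := by
  induction k with
  | zero => simp [coeff]
  | succ k ih =>
    rw [coeff_succ, ih, show 2 * (k + 1) + 1 = 2 * k + 1 + 1 + 1 by ring,
      Nat.factorial_succ (2 * k + 1 + 1), Nat.factorial_succ (2 * k + 1)]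
    push_cast
    field_simp
    ring

lemma mul_Omega_three {t : ℝ} (ht : 0 ≤ t) : t * Omega 3 t = Real.sin t := by
  refine ((hasSum_Omega three_pos ht).mul_left t).unique ?_
  refine HasSum.congr_fun (Real.hasSum_sin t) fun k => ?_
  rw [coeff_three]
  ring

lemma neg_half_le_Omega_three {t : ℝ} (ht : 0 ≤ t) : -1 / 2 ≤ Omega 3 t := by
  rcases ht.eq_or_lt with rfl | ht0
  · rw [Omega, if_pos rfl]; norm_num
  have h := mul_Omega_three ht
  rcases le_total t 2 with h2 | h2
  · have := Real.sin_nonneg_of_nonneg_of_le_pi ht (h2.trans Real.two_le_pi)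
    nlinarith
  · have := Real.neg_one_le_sin t
    nlinarith

lemma coeff_two (k : ℕ) : coeff 2 k = (-1) ^ k / (2 * k).factorial *
    ∏ i ∈ Finset.range k, (2 * (i : ℝ) + 1) / (2 * i + 2) := by
  induction k with
  | zero => simp [coeff]
  | succ k ih =>
    rw [coeff_succ, ih, Finset.prod_range_succ, show 2 * (k + 1) = 2 * k + 1 + 1 by ring,
      Nat.factorial_succ (2 * k + 1), Nat.factorial_succ (2 * k)]
    push_cast
    field_simp
    ring

lemma integral_cos_mul_sin {t : ℝ} (ht : 0 ≤ t) :
    ∫ θ in (0 : ℝ)..π, Real.cos (t * Real.sin θ) = π * Omega 2 t := by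
  have h : HasSum (fun k : ℕ => ∫ θ in (0 : ℝ)..π,
      (-1) ^ k * (t * Real.sin θ) ^ (2 * k) / (2 * k).factorial)
      (∫ θ in (0 : ℝ)..π, Real.cos (t * Real.sin θ)) := by
    refine intervalIntegral.hasSum_integral_of_dominated_convergence
      (fun k _ => t ^ (2 * k) / (2 * k).factorial) (fun k => ?_) (fun k => ?_) ?_ ?_ ?_
    · exact (by fun_prop : Continuous fun θ : ℝ =>
        (-1) ^ k * (t * Real.sin θ) ^ (2 * k) / (2 * k).factorial).aestronglyMeasurable
    · refine .of_forall fun θ _ => ?_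
      rw [norm_div, norm_mul, norm_pow, norm_neg, norm_one, one_pow, one_mul, norm_pow, norm_mul,
        Real.norm_of_nonneg ht, Real.norm_natCast]
      gcongr
      exact mul_le_of_le_one_right ht (Real.abs_sin_le_one θ)
    · exact .of_forall fun θ _ => (Real.summable_pow_div_factorial t).comp_injective
        (mul_right_injective₀ two_ne_zero)
    · simp
    · exact .of_forall fun θ _ => Real.hasSum_cos _
  refine h.unique ?_
  refine HasSum.congr_fun ((hasSum_Omega two_pos ht).mul_left π) fun k => ?_
  have e (θ : ℝ) : (-1) ^ k * (t * Real.sin θ) ^ (2 * k) / (2 * k).factorial =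
      (-1) ^ k * t ^ (2 * k) / (2 * k).factorial * Real.sin θ ^ (2 * k) := by
    rw [mul_pow]; ring
  simp_rw [e]
  rw [intervalIntegral.integral_const_mul, integral_sin_pow_even, coeff_two]
  ring

lemma neg_three_halves_le_cos_add_cos_add_cos {a b c : ℝ} (h : a + b + c = 0) :
    -3 / 2 ≤ Real.cos a + Real.cos b + Real.cos c := by
  obtain rfl : c = -(a + b) := by linarith
  rw [Real.cos_neg, Real.cos_add]
  nlinarith [sq_nonneg (1 + Real.cos a + Real.cos b), sq_nonneg (Real.sin a - Real.sin b),
    Real.sin_sq_add_cos_sq a, Real.sin_sq_add_cos_sq b]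

lemma sin_add_sin_add_sin (θ : ℝ) :
    Real.sin θ + Real.sin (θ + 2 * π / 3) + Real.sin (θ + 4 * π / 3) = 0 := by
  have h1 : θ = (θ + 2 * π / 3) - 2 * π / 3 := by ring
  have h2 : θ + 4 * π / 3 = (θ + 2 * π / 3) + 2 * π / 3 := by ring
  have hc : Real.cos (2 * π / 3) = -1 / 2 := by
    rw [show 2 * π / 3 = π - π / 3 by ring, Real.cos_pi_sub, Real.cos_pi_div_three]; ring
  rw [h2, Real.sin_add (θ + 2 * π / 3), show Real.sin θ = _ by
    conv_lhs => rw [h1, Real.sin_sub], hc]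
  ring

lemma integral_cos_mul_sin_add (t x : ℝ) :
    ∫ θ in (0 : ℝ)..π, Real.cos (t * Real.sin (θ + x)) =
      ∫ θ in (0 : ℝ)..π, Real.cos (t * Real.sin θ) := by
  have hp : Function.Periodic (fun θ => Real.cos (t * Real.sin θ)) π := fun θ => by
    simp [Real.sin_add_pi]
  rw [intervalIntegral.integral_comp_add_right (fun θ => Real.cos (t * Real.sin θ)), add_comm π x,
    zero_add, hp.intervalIntegral_add_eq x 0, zero_add]

lemma neg_half_le_Omega_two {t : ℝ} (ht : 0 ≤ t) : -1 / 2 ≤ Omega 2 t := by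
  have hi (x : ℝ) : IntervalIntegrable (fun θ => Real.cos (t * Real.sin (θ + x))) volume 0 π :=
    Continuous.intervalIntegrable (by fun_prop) _ _
  have h0 := by simpa using hi 0
  have h : ∫ _ in (0 : ℝ)..π, (-3 / 2 : ℝ) ≤ ∫ θ in (0 : ℝ)..π, (Real.cos (t * Real.sin θ) +
      Real.cos (t * Real.sin (θ + 2 * π / 3)) + Real.cos (t * Real.sin (θ + 4 * π / 3))) := by
    refine intervalIntegral.integral_mono_on pi_pos.le (by simp) ((h0.add (hi _)).add (hi _))
      fun θ _ => neg_three_halves_le_cos_add_cos_add_cos ?_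
    rw [← mul_add, ← mul_add, sin_add_sin_add_sin, mul_zero]
  rw [intervalIntegral.integral_add (h0.add (hi _)) (hi _),
    intervalIntegral.integral_add h0 (hi _), integral_cos_mul_sin_add, integral_cos_mul_sin_add,
    integral_cos_mul_sin ht, intervalIntegral.integral_const, smul_eq_mul, sub_zero] at h
  nlinarith [pi_pos]

end SphericalBessel

open SphericalBessel in
theorem omega_ge_neg_half (n : ℕ) (hn : 2 ≤ n) (t : ℝ) (ht : 0 ≤ t) :
    Omega n t ≥ -1/2 := by
  induction n using Nat.strong_induction_on generalizing t with
  | _ n ih =>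
    obtain rfl | rfl | h : n = 2 ∨ n = 3 ∨ 4 ≤ n := by omega
    · exact neg_half_le_Omega_two ht
    · exact neg_half_le_Omega_three ht
    · obtain ⟨m, rfl⟩ : ∃ m, n = m + 2 := ⟨n - 2, by omega⟩
      exact neg_half_le_Omega_add_two (by omega)
        (fun s hs => ih m (by omega) (by omega) s hs) ht
end

section
/- (Main theorem) Let d_1,…,d_N be positive reals and let A ⊆ ℝ^n be a Lebesgue measurable set such that no two points of A are at Euclidean distance d_k for any k. Suppose z_0, z_1, …, z_N are real numbers with z_0 + z_1 + ⋯ + z_N ≥ 1 and z_0 + Σ_{k=1}^N z_k Ω_n(t d_k) ≥ 0 for all t ≥ 0. Then the upper density of A satisfies δ̄(A) ≤ z_0. -/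
open MeasureTheory Filter Real

open Measure in
theorem integral_sphere_mul_radial {E : Type*} [NormedAddCommGroup E] [InnerProductSpace ℝ E]
    [FiniteDimensional ℝ E] [MeasurableSpace E] [BorelSpace E] [Nontrivial E]
    (f : Metric.sphere (0 : E) 1 → ℝ) (g : ℝ → ℝ) (h : E → ℝ)
    (hfg : ∀ (ξ : Metric.sphere (0 : E) 1) (r : ℝ), 0 < r → h (r • (ξ : E)) = f ξ * g r) :
    ∫ x, h x = (∫ ξ, f ξ ∂(volume : Measure E).toSphere) *
      ∫ r in Set.Ioi (0 : ℝ), r ^ (Module.finrank ℝ E - 1) * g r := by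
  calc
    ∫ x, h x = ∫ x : ({(0)}ᶜ : Set E), h x ∂((volume : Measure E).comap (↑)) := by
      rw [integral_subtype_comap (measurableSet_singleton _).compl h, restrict_compl_singleton]
    _ = ∫ p, f p.1 * g p.2 ∂(volume : Measure E).toSphere.prod
          (.volumeIoiPow (Module.finrank ℝ E - 1)) := by
      rw [← (volume : Measure E).measurePreserving_homeomorphUnitSphereProd.integral_comp
        (Homeomorph.measurableEmbedding _)]
      congr with x
      rw [← hfg _ _ (homeomorphUnitSphereProd E x).2.2]
      have := (homeomorphUnitSphereProd E).symm_apply_apply x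
      conv_lhs => rw [← this]
      rw [homeomorphUnitSphereProd_symm_apply_coe]
    _ = _ := by
      rw [integral_prod_mul f (fun r : Set.Ioi (0 : ℝ) => g r)]
      congr 1
      simp only [Measure.volumeIoiPow, ENNReal.ofReal]
      rw [integral_withDensity_eq_integral_smul,
        integral_subtype_comap measurableSet_Ioi
          fun a ↦ Real.toNNReal (a ^ (Module.finrank ℝ E - 1)) • g a,
        setIntegral_congr_fun measurableSet_Ioi fun x hx ↦ ?_]
      · rw [NNReal.smul_def, Real.coe_toNNReal _ (pow_nonneg hx.out.le _), smul_eq_mul]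
      · exact (measurable_subtype_coe.pow_const _).real_toNNReal

theorem integral_Ioi_pow_mul_exp_neg_sq (m : ℕ) :
    ∫ x in Set.Ioi (0 : ℝ), x ^ m * exp (-x ^ 2) = Gamma ((m + 1) / 2) / 2 := by
  have := integral_rpow_mul_exp_neg_rpow (p := 2) (q := m) (by norm_num)
    (by linarith [(Nat.cast_nonneg m : (0 : ℝ) ≤ m)])
  simp only [rpow_natCast, rpow_ofNat] at this
  rw [this]; ring

theorem integral_even_pow_mul_exp_neg_sq (k : ℕ) :
    ∫ x : ℝ, x ^ (2 * k) * exp (-x ^ 2) = Gamma (k + 1 / 2) := by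
  have := integral_comp_abs (f := fun x : ℝ => x ^ (2 * k) * exp (-x ^ 2))
  simp only [pow_mul, sq_abs] at this
  simp only [pow_mul]
  rw [this]
  have h := integral_Ioi_pow_mul_exp_neg_sq (2 * k)
  simp only [pow_mul] at h
  rw [h]
  push_cast
  rw [show ((2 * k + 1) / 2 : ℝ) = k + 1 / 2 by ring]
  ring

theorem integral_inner_pow_mul_exp_neg_norm_sq {ι : Type*} [Fintype ι] [DecidableEq ι] (i₀ : ι)
    (u : EuclideanSpace ℝ ι) (k : ℕ) :
    ∫ x : EuclideanSpace ℝ ι, (inner ℝ u x) ^ (2 * k) * exp (-‖x‖ ^ 2) =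
      ‖u‖ ^ (2 * k) * (Gamma (k + 1 / 2) * √π ^ (Fintype.card ι - 1)) := by
  obtain ⟨b, hb⟩ : ∃ b : OrthonormalBasis ι ℝ (EuclideanSpace ℝ ι), u = ‖u‖ • b i₀ := by
    rcases eq_or_ne u 0 with rfl | hu
    · exact ⟨EuclideanSpace.basisFun ι ℝ, by simp⟩
    · obtain ⟨b, hb⟩ := Orthonormal.exists_orthonormalBasis_extension_of_card_eq (𝕜 := ℝ)
        (E := EuclideanSpace ℝ ι) (ι := ι) (by simp) (v := fun _ => ‖u‖⁻¹ • u) (s := {i₀})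
        ⟨fun i => by simp [norm_smul, hu], fun i j hij => (hij (Subsingleton.elim i j)).elim⟩
      refine ⟨b, ?_⟩
      rw [hb i₀ rfl, smul_smul, mul_inv_cancel₀ (norm_ne_zero_iff.2 hu), one_smul]
  have key : ∀ x : EuclideanSpace ℝ ι, (inner ℝ u x) ^ (2 * k) * exp (-‖x‖ ^ 2) =
      ‖u‖ ^ (2 * k) * ((b.repr x i₀) ^ (2 * k) * exp (-‖b.repr x‖ ^ 2)) := by
    intro x
    conv_lhs => rw [hb]
    rw [real_inner_smul_left, mul_pow, LinearIsometryEquiv.norm_map, b.repr_apply_apply, mul_assoc]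
  simp_rw [key]
  rw [integral_const_mul]
  congr 1
  rw [b.measurePreserving_repr.integral_comp b.repr.toHomeomorph.measurableEmbedding
      (g := fun y : EuclideanSpace ℝ ι => (y i₀) ^ (2 * k) * exp (-‖y‖ ^ 2)),
    ← (PiLp.volume_preserving_toLp ι).integral_comp
      (MeasurableEquiv.toLp 2 (ι → ℝ)).measurableEmbedding]
  have h2 : ∀ y : ι → ℝ, (WithLp.toLp 2 y : EuclideanSpace ℝ ι) i₀ ^ (2 * k) *
      exp (-‖(WithLp.toLp 2 y : EuclideanSpace ℝ ι)‖ ^ 2) =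
      ∏ i, (if i = i₀ then (y i) ^ (2 * k) * exp (-(y i) ^ 2) else exp (-(y i) ^ 2)) := by
    intro y
    rw [EuclideanSpace.norm_sq_eq]
    simp only [Real.norm_eq_abs, sq_abs, ← Finset.sum_neg_distrib, Real.exp_sum]
    rw [← Finset.mul_prod_erase _ _ (Finset.mem_univ i₀),
      ← Finset.mul_prod_erase _ _ (Finset.mem_univ i₀), if_pos rfl, mul_assoc]
    congr 2
    exact Finset.prod_congr rfl fun i hi => by rw [if_neg (Finset.ne_of_mem_erase hi)]
  simp_rw [h2]
  rw [integral_fintype_prod_volume_eq_prod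
    (f := fun i (t : ℝ) => if i = i₀ then t ^ (2 * k) * exp (-t ^ 2) else exp (-t ^ 2)),
    ← Finset.mul_prod_erase _ _ (Finset.mem_univ i₀)]
  simp only [if_true]
  rw [integral_even_pow_mul_exp_neg_sq, Finset.prod_congr rfl
    (g := fun _ => √π) fun i hi => ?_]
  · rw [Finset.prod_const, Finset.card_erase_of_mem (Finset.mem_univ _), Finset.card_univ]
  · simp only [if_neg (Finset.ne_of_mem_erase hi)]
    simpa using integral_gaussian 1

theorem integral_sphere_inner_pow {n : ℕ} (hn : 1 ≤ n) (u : EuclideanSpace ℝ (Fin n)) (k : ℕ) :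
    ∫ ξ, (inner ℝ u (ξ : EuclideanSpace ℝ (Fin n))) ^ (2 * k)
        ∂(volume : Measure (EuclideanSpace ℝ (Fin n))).toSphere =
      2 * ‖u‖ ^ (2 * k) * (Gamma (k + 1 / 2) * √π ^ (n - 1)) / Gamma (k + n / 2) := by
  have : NeZero n := ⟨by omega⟩
  have h1 := integral_inner_pow_mul_exp_neg_norm_sq (0 : Fin n) u k
  rw [integral_sphere_mul_radial
    (fun ξ => (inner ℝ u (ξ : EuclideanSpace ℝ (Fin n))) ^ (2 * k))
    (fun r => r ^ (2 * k) * exp (-r ^ 2))] at h1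
  · simp only [finrank_euclideanSpace, Fintype.card_fin, ← mul_assoc, ← pow_add] at h1
    rw [integral_Ioi_pow_mul_exp_neg_sq] at h1
    have e : ((n - 1 + 2 * k : ℕ) + 1 : ℝ) / 2 = k + n / 2 := by
      push_cast [Nat.cast_sub hn]; ring
    rw [e] at h1
    have hG : 0 < Gamma (k + n / 2 : ℝ) := Gamma_pos_of_pos (by positivity)
    rw [eq_div_iff hG.ne']
    linarith
  · intro ξ r hr
    have : ‖(ξ : EuclideanSpace ℝ (Fin n))‖ = 1 := by simp
    rw [real_inner_smul_right, norm_smul, this, mul_one, Real.norm_of_nonneg hr.le]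
    ring

theorem Omega_eq_tsum {n : ℕ} (hn : 1 ≤ n) {t : ℝ} (ht : 0 ≤ t) :
    Omega n t = ∑' k : ℕ, (-1 : ℝ) ^ k * Gamma (n / 2) / (k.factorial * Gamma (k + n / 2)) *
      (t / 2) ^ (2 * k) := by
  have hG : 0 < Gamma (n / 2 : ℝ) := Gamma_pos_of_pos (by positivity)
  rcases ht.eq_or_lt with rfl | ht
  · rw [Omega, if_pos rfl, tsum_eq_single 0]
    · simp [hG.ne']
    · intro k hk
      simp [hk]
  · rw [Omega, if_neg ht.ne', besselJ, ← tsum_mul_left]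
    congr 1 with k
    have e1 : ((k : ℝ) + (n - 2) / 2 + 1) = k + n / 2 := by ring
    have e2 : (2 / t) ^ (((n : ℝ) - 2) / 2) * (t / 2) ^ (((n : ℝ) - 2) / 2) = 1 := by
      rw [← mul_rpow (by positivity) (by positivity)]
      have : 2 / t * (t / 2) = 1 := by field_simp
      rw [this, one_rpow]
    have e3 : (t / 2) ^ (2 * (k : ℝ)) = (t / 2) ^ (2 * k) := by
      exact_mod_cast rpow_natCast (t / 2) (2 * k)
    rw [e1, rpow_add (by positivity), e3]
    linear_combination ((-1 : ℝ) ^ k * Gamma (n / 2) / (k.factorial * Gamma (k + n / 2)) *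
      (t / 2) ^ (2 * k)) * e2

theorem factorial_two_mul_eq (k : ℕ) :
    ((2 * k).factorial : ℝ) * √π = 4 ^ k * k.factorial * Gamma (k + 1 / 2) := by
  induction k with
  | zero => simp [-one_div, Gamma_one_half_eq]
  | succ k ih =>
    have e : ((k + 1 : ℕ) : ℝ) + 1 / 2 = (k + 1 / 2) + 1 := by push_cast; ring
    rw [e, Gamma_add_one (by positivity), show 2 * (k + 1) = 2 * k + 1 + 1 by ring,
      Nat.factorial_succ, Nat.factorial_succ, Nat.factorial_succ]
    push_cast
    linear_combination ((2 * k + 1 + 1) * (2 * k + 1) : ℝ) * ih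

theorem integral_sphere_cos_inner {n : ℕ} (hn : 1 ≤ n) (u : EuclideanSpace ℝ (Fin n)) :
    ∫ ξ, cos (inner ℝ u (ξ : EuclideanSpace ℝ (Fin n)))
        ∂(volume : Measure (EuclideanSpace ℝ (Fin n))).toSphere =
      (volume : Measure (EuclideanSpace ℝ (Fin n))).toSphere.real Set.univ * Omega n ‖u‖ := by
  set σ := (volume : Measure (EuclideanSpace ℝ (Fin n))).toSphere
  have hG : 0 < Gamma (n / 2 : ℝ) := Gamma_pos_of_pos (by positivity)
  have hσ : σ.real Set.univ = 2 * √π ^ n / Gamma (n / 2) := by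
    have := integral_sphere_inner_pow hn u 0
    simp only [mul_zero, pow_zero, integral_const, smul_eq_mul, mul_one, Nat.cast_zero, zero_add,
      Gamma_one_half_eq] at this
    rw [this, ← pow_succ', Nat.sub_add_cancel hn]
  have hcont : ∀ k : ℕ, Continuous fun ξ : Metric.sphere (0 : EuclideanSpace ℝ (Fin n)) 1 =>
      (-1 : ℝ) ^ k * (inner ℝ u (ξ : EuclideanSpace ℝ (Fin n))) ^ (2 * k) / (2 * k).factorial :=
    fun k => by fun_prop
  have hbound : ∀ (k : ℕ) (ξ : Metric.sphere (0 : EuclideanSpace ℝ (Fin n)) 1),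
      ‖(-1 : ℝ) ^ k * (inner ℝ u (ξ : EuclideanSpace ℝ (Fin n))) ^ (2 * k) /
        (2 * k).factorial‖ ≤ ‖u‖ ^ (2 * k) / (2 * k).factorial := by
    intro k ξ
    rw [norm_div, norm_mul, norm_pow, norm_pow, norm_neg, norm_one, one_pow, one_mul,
      Real.norm_natCast]
    gcongr
    simpa using norm_inner_le_norm (𝕜 := ℝ) u (ξ : EuclideanSpace ℝ (Fin n))
  have hint : ∀ k : ℕ, Integrable (fun ξ : Metric.sphere (0 : EuclideanSpace ℝ (Fin n)) 1 =>
      (-1 : ℝ) ^ k * (inner ℝ u (ξ : EuclideanSpace ℝ (Fin n))) ^ (2 * k) /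
        (2 * k).factorial) σ := fun k =>
    (integrable_const (‖u‖ ^ (2 * k) / (2 * k).factorial : ℝ)).mono'
      (hcont k).aestronglyMeasurable (.of_forall (hbound k))
  have hsum : Summable fun k : ℕ => ‖u‖ ^ (2 * k) / (2 * k).factorial :=
    (Real.summable_pow_div_factorial ‖u‖).comp_injective
      (i := fun k : ℕ => 2 * k) fun a b h => by simpa using h
  simp_rw [Real.cos_eq_tsum]
  rw [← (hasSum_integral_of_summable_integral_norm hint ?_).tsum_eq,
    Omega_eq_tsum hn (norm_nonneg u), ← tsum_mul_left]
  · congr 1 with k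
    rw [integral_div, integral_const_mul, integral_sphere_inner_pow hn, hσ]
    have hGk : 0 < Gamma (k + n / 2 : ℝ) := Gamma_pos_of_pos (by positivity)
    have hf := factorial_two_mul_eq k
    have hk : (0 : ℝ) < k.factorial := by positivity
    have h2k : (0 : ℝ) < (2 * k).factorial := by positivity
    have e4 : (2 : ℝ) ^ (2 * k) = 4 ^ k := by rw [pow_mul]; norm_num
    have e5 : √π ^ n = √π ^ (n - 1) * √π := by rw [← pow_succ, Nat.sub_add_cancel hn]
    generalize Gamma (k + 1 / 2 : ℝ) = G at hf ⊢
    rw [div_pow, e4, e5]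
    field_simp
    linear_combination -(‖u‖ ^ (2 * k)) * hf
  · refine Summable.of_nonneg_of_le (fun k => integral_nonneg fun _ => norm_nonneg _) (fun k => ?_)
      (hsum.mul_left (σ.real Set.univ))
    calc _ ≤ ∫ _, ‖u‖ ^ (2 * k) / (2 * k).factorial ∂σ :=
          integral_mono (hint k).norm (integrable_const _) (hbound k)
      _ = _ := by simp

section UnitTorus

attribute [local instance] instMeasureSpaceUnitAddCircle

local instance : Measure.IsAddHaarMeasure (volume : Measure UnitAddCircle) :=
  inferInstanceAs (Measure.IsAddHaarMeasure AddCircle.haarAddCircle)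

local instance : IsProbabilityMeasure (volume : Measure UnitAddCircle) :=
  inferInstanceAs (IsProbabilityMeasure AddCircle.haarAddCircle)

open UnitAddTorus ComplexConjugate

theorem mFourierCoeff_zero_indicator {ι : Type*} [Fintype ι] {B : Set (UnitAddTorus ι)}
    (hB : MeasurableSet B) :
    mFourierCoeff (B.indicator fun _ => (1 : ℂ)) 0 = (volume.real B : ℂ) := by
  simp [mFourierCoeff, mFourier_zero, integral_indicator hB]

theorem mFourierCoeff_comp_add_right {ι : Type*} [Fintype ι] (f : UnitAddTorus ι → ℂ)
    (y : UnitAddTorus ι) (m : ι → ℤ) :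
    mFourierCoeff (fun x => f (x + y)) m = mFourier m y * mFourierCoeff f m := by
  have h : ∀ x, mFourier (-m) x • f (x + y) =
      mFourier m y * (mFourier (-m) (x + y) • f (x + y)) := by
    intro x
    have h1 : mFourier (-m) (x + y) = mFourier (-m) x * mFourier (-m) y := by
      simp [mFourier, fourier_apply, AddCircle.toCircle_add, Finset.prod_mul_distrib]
    have h2 : mFourier m y * mFourier (-m) y = 1 := by
      rw [← mFourier_add]; simp [mFourier_zero]
    rw [h1, smul_eq_mul, smul_eq_mul]
    linear_combination (-(mFourier (-m) x * f (x + y))) * h2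
  unfold mFourierCoeff
  simp_rw [h]
  rw [integral_const_mul, integral_add_right_eq_self (fun x => mFourier (-m) x • f x)]

theorem hasSum_norm_sq_mFourierCoeff_indicator {ι : Type*} [Fintype ι] {B : Set (UnitAddTorus ι)}
    (hB : MeasurableSet B) :
    HasSum (fun m => ‖mFourierCoeff (B.indicator fun _ => (1 : ℂ)) m‖ ^ 2) (volume.real B) := by
  have hf : MemLp (B.indicator fun _ => (1 : ℂ)) 2 (volume : Measure (UnitAddTorus ι)) :=
    memLp_indicator_const 2 hB 1 (.inr (measure_ne_top _ _))
  have hc : ∀ m, mFourierCoeff (hf.toLp _) m = mFourierCoeff (B.indicator fun _ => (1 : ℂ)) m :=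
    fun m => integral_congr_ae (hf.coeFn_toLp.mono fun x hx => by simp only [hx])
  have := hasSum_sq_mFourierCoeff (hf.toLp _)
  simp_rw [hc] at this
  convert this using 1
  rw [integral_congr_ae (g := B.indicator fun _ => (1 : ℝ))]
  · simp [integral_indicator hB]
  · filter_upwards [hf.coeFn_toLp] with x hx
    rw [hx]
    by_cases hxB : x ∈ B <;> simp [hxB]

theorem hasSum_norm_sq_mFourierCoeff_indicator_mul {ι : Type*} [Fintype ι]
    {B : Set (UnitAddTorus ι)} (hB : MeasurableSet B) (y : UnitAddTorus ι)
    (hy : ∀ x ∈ B, x + y ∉ B) :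
    HasSum (fun m => ‖mFourierCoeff (B.indicator fun _ => (1 : ℂ)) m‖ ^ 2 * (mFourier m y).re)
      0 := by
  set f : UnitAddTorus ι → ℂ := B.indicator fun _ => (1 : ℂ) with hfdef
  have hf : MemLp f 2 (volume : Measure (UnitAddTorus ι)) :=
    memLp_indicator_const 2 hB 1 (.inr (measure_ne_top _ _))
  have hg : MemLp (fun x => f (x + y)) 2 (volume : Measure (UnitAddTorus ι)) :=
    hf.comp_measurePreserving (measurePreserving_add_right volume y)
  have hc : ∀ m, mFourierCoeff (hf.toLp _) m = mFourierCoeff f m :=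
    fun m => integral_congr_ae (hf.coeFn_toLp.mono fun x hx => by simp only [hx])
  have hc' : ∀ m, mFourierCoeff (hg.toLp _) m = mFourier m y * mFourierCoeff f m := by
    intro m
    rw [← mFourierCoeff_comp_add_right]
    exact integral_congr_ae (hg.coeFn_toLp.mono fun x hx => by simp only [hx])
  have h := hasSum_prod_mFourierCoeff (hf.toLp _) (hg.toLp _)
  have h0 : ∫ t, conj (hf.toLp _ t) * hg.toLp _ t = 0 := by
    rw [integral_eq_zero_of_ae]
    filter_upwards [hf.coeFn_toLp, hg.coeFn_toLp] with x hx hx'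
    rw [hx, hx']
    by_cases hxB : x ∈ B
    · simp [hfdef, hy x hxB]
    · simp [hfdef, hxB]
  rw [h0] at h
  have h' := Complex.hasSum_re h
  simp only [Complex.zero_re] at h'
  convert h' using 2 with m
  rw [hc, hc', mul_left_comm, Complex.conj_mul', mul_comm, ← Complex.ofReal_pow,
    Complex.re_mul_ofReal]

theorem mFourier_coe_re {ι : Type*} [Fintype ι] (m : ι → ℤ) (y : ι → ℝ) :
    (mFourier m (fun i => (y i : UnitAddCircle))).re = cos (2 * π * ∑ i, m i * y i) := by
  have : mFourier m (fun i => (y i : UnitAddCircle)) =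
      Complex.exp ((2 * π * ∑ i, m i * y i : ℝ) * Complex.I) := by
    simp only [mFourier, ContinuousMap.coe_mk, fourier_coe_apply]
    rw [← Complex.exp_sum]
    congr 1
    push_cast
    rw [Finset.mul_sum, Finset.sum_mul]
    exact Finset.sum_congr rfl fun i _ => by ring
  rw [this, Complex.exp_ofReal_mul_I_re]

theorem hasSum_norm_sq_mFourierCoeff_indicator_mul_Omega {n : ℕ} (hn : 1 ≤ n)
    {B : Set (UnitAddTorus (Fin n))} (hB : MeasurableSet B) {s : ℝ} (hs : 0 ≤ s)
    (h : ∀ ξ : EuclideanSpace ℝ (Fin n), ‖ξ‖ = 1 →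
      ∀ x ∈ B, (x + fun i => ((s * ξ i : ℝ) : UnitAddCircle)) ∉ B) :
    HasSum (fun m => ‖mFourierCoeff (B.indicator fun _ => (1 : ℂ)) m‖ ^ 2 *
      Omega n (2 * π * ‖(WithLp.toLp 2 fun i => (m i : ℝ) : EuclideanSpace ℝ (Fin n))‖ * s)) 0 := by
  set c := fun m => ‖mFourierCoeff (B.indicator fun _ => (1 : ℂ)) m‖ ^ 2
  set v : (Fin n → ℤ) → EuclideanSpace ℝ (Fin n) := fun m => WithLp.toLp 2 fun i => (m i : ℝ)
  set σ := (volume : Measure (EuclideanSpace ℝ (Fin n))).toSphere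
  have : NeZero n := ⟨by omega⟩
  have hσ : σ.real Set.univ ≠ 0 := by
    rw [measureReal_ne_zero_iff]
    exact (Measure.measure_univ_ne_zero).2 (Measure.toSphere_ne_zero volume)
  have hc : Summable c := (hasSum_norm_sq_mFourierCoeff_indicator hB).summable
  have hc0 : ∀ m, 0 ≤ c m := fun m => by positivity
  have hpt : ∀ ξ : Metric.sphere (0 : EuclideanSpace ℝ (Fin n)) 1,
      HasSum (fun m => c m * cos (inner ℝ ((2 * π * s) • v m) (ξ : EuclideanSpace ℝ (Fin n))))
        0 := by
    intro ξ
    convert hasSum_norm_sq_mFourierCoeff_indicator_mul hB _ (h ξ (by simp)) using 3 with m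
    rw [mFourier_coe_re, real_inner_smul_left, PiLp.inner_apply, mul_assoc, Finset.mul_sum]
    simp only [RCLike.inner_apply, conj_trivial, v]
    congr 2
    exact Finset.sum_congr rfl fun i _ => by ring
  have hb : ∀ m, ∀ ξ : Metric.sphere (0 : EuclideanSpace ℝ (Fin n)) 1,
      ‖c m * cos (inner ℝ ((2 * π * s) • v m) (ξ : EuclideanSpace ℝ (Fin n)))‖ ≤ c m := by
    intro m ξ
    rw [norm_mul, Real.norm_of_nonneg (hc0 m)]
    exact mul_le_of_le_one_right (hc0 m) (Real.abs_cos_le_one _)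
  have hint : ∀ m, Integrable (fun ξ : Metric.sphere (0 : EuclideanSpace ℝ (Fin n)) 1 =>
      c m * cos (inner ℝ ((2 * π * s) • v m) (ξ : EuclideanSpace ℝ (Fin n)))) σ := fun m =>
    (integrable_const (c m)).mono' (by fun_prop) (.of_forall (hb m))
  have hmain := hasSum_integral_of_summable_integral_norm hint <|
    Summable.of_nonneg_of_le (fun m => integral_nonneg fun _ => norm_nonneg _) (fun m => by
      calc _ ≤ ∫ _, c m ∂σ := integral_mono (hint m).norm (integrable_const _) (hb m)
        _ = _ := by simp) (hc.mul_left (σ.real Set.univ))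
  simp_rw [fun ξ => (hpt ξ).tsum_eq, integral_zero, integral_const_mul] at hmain
  convert! hmain.div_const (σ.real Set.univ) using 1
  · funext m
    have := integral_sphere_cos_inner hn ((2 * π * s) • v m)
    rw [this, norm_smul, Real.norm_of_nonneg (by positivity)]
    rw [show 2 * π * s * ‖v m‖ = 2 * π * ‖v m‖ * s by ring, mul_div_assoc,
      mul_div_cancel_left₀ _ hσ]
  · simp

theorem volume_real_sq_le_of_avoids {n N : ℕ} (hn : 1 ≤ n)
    {B : Set (UnitAddTorus (Fin n))} (hB : MeasurableSet B) {s : Fin N → ℝ} (hs : ∀ k, 0 ≤ s k)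
    (h : ∀ k, ∀ ξ : EuclideanSpace ℝ (Fin n), ‖ξ‖ = 1 →
      ∀ x ∈ B, (x + fun i => ((s k * ξ i : ℝ) : UnitAddCircle)) ∉ B)
    {z₀ : ℝ} {z : Fin N → ℝ} (hsum : 1 ≤ z₀ + ∑ k, z k)
    (hpos : ∀ t : ℝ, 0 ≤ t → 0 ≤ z₀ + ∑ k, z k * Omega n (t * s k)) :
    volume.real B ^ 2 ≤ z₀ * volume.real B := by
  have h1 := (hasSum_norm_sq_mFourierCoeff_indicator hB).mul_left z₀
  have h2 := hasSum_sum (s := Finset.univ) fun k _ =>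
    (hasSum_norm_sq_mFourierCoeff_indicator_mul_Omega hn hB (hs k) (h k)).mul_left (z k)
  have h3 := h1.add h2
  simp only [mul_zero, Finset.sum_const_zero, add_zero] at h3
  have h4 : ∀ m, z₀ * ‖mFourierCoeff (B.indicator fun _ => (1 : ℂ)) m‖ ^ 2 +
      ∑ k, z k * (‖mFourierCoeff (B.indicator fun _ => (1 : ℂ)) m‖ ^ 2 *
        Omega n (2 * π * ‖(WithLp.toLp 2 fun i => (m i : ℝ) : EuclideanSpace ℝ (Fin n))‖ * s k)) =
      ‖mFourierCoeff (B.indicator fun _ => (1 : ℂ)) m‖ ^ 2 * (z₀ + ∑ k, z k *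
        Omega n (2 * π * ‖(WithLp.toLp 2 fun i => (m i : ℝ) : EuclideanSpace ℝ (Fin n))‖ * s k)) := by
    intro m
    rw [mul_add, Finset.mul_sum, mul_comm]
    congr 1
    exact Finset.sum_congr rfl fun k _ => by ring
  simp_rw [h4] at h3
  refine le_trans ?_ (le_hasSum h3 0 fun m _ => mul_nonneg (by positivity) (hpos _ (by positivity)))
  rw [mFourierCoeff_zero_indicator hB, Complex.norm_real, Real.norm_of_nonneg measureReal_nonneg]
  have h0 : ‖(WithLp.toLp 2 fun i => (((0 : Fin n → ℤ) i : ℤ) : ℝ) :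
      EuclideanSpace ℝ (Fin n))‖ = 0 := by
    rw [norm_eq_zero]; ext i; simp
  rw [h0]
  simp only [mul_zero, zero_mul, Omega, if_true, mul_one]
  exact le_mul_of_one_le_right (by positivity) hsum

theorem volume_real_sq_le_of_avoidsDistance {n N : ℕ} (hn : 1 ≤ n) {d : Fin N → ℝ}
    (hd : ∀ k, 0 < d k) {A : Set (EuclideanSpace ℝ (Fin n))} (hA : MeasurableSet A)
    (havoid : ∀ k, AvoidsDistance A (d k)) {R T : ℝ} (hT : 0 < T)
    (hAR : ∀ x ∈ A, ∀ i, |x i| ≤ R) (hdR : ∀ k, 2 * R + d k < 2 * T)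
    (hRT : R < T)
    {z₀ : ℝ} {z : Fin N → ℝ} (hsum : 1 ≤ z₀ + ∑ k, z k)
    (hpos : ∀ t : ℝ, 0 ≤ t → 0 ≤ z₀ + ∑ k, z k * Omega n (t * d k)) :
    (volume.real A / (2 * T) ^ n) ^ 2 ≤ z₀ * (volume.real A / (2 * T) ^ n) := by
  set L := 2 * T
  have hL : 0 < L := by positivity
  set φ : (Fin n → ℝ) → EuclideanSpace ℝ (Fin n) := fun p => L • WithLp.toLp 2 p with hφ
  have hφm : Measurable φ := by fun_prop
  set e := measurableEquivPiIoc (fun _ : Fin n => (-1 / 2 : ℝ))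
  set B : Set (UnitAddTorus (Fin n)) := e ⁻¹' (Subtype.val ⁻¹' (φ ⁻¹' A)) with hBdef
  have hB : MeasurableSet B :=
    e.measurable (measurable_subtype_coe (hφm hA))
  have hcube : φ ⁻¹' A ⊆ {x | ∀ i, x i ∈ Set.Ioc (-1 / 2 : ℝ) (-1 / 2 + 1)} := by
    intro p hp i
    have h := abs_le.1 (hAR _ hp i)
    simp only [hφ, PiLp.smul_apply, smul_eq_mul] at h
    constructor <;> by_contra! hc <;> nlinarith
  have hvol : volume.real B = volume.real A / L ^ n := by
    have h1 : volume B = volume (φ ⁻¹' A) := by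
      rw [hBdef, (measurePreserving_equivPiIoc _).measure_preimage
        (measurable_subtype_coe (hφm hA)).nullMeasurableSet,
        comap_subtype_coe_apply (MeasurableSet.univ_pi' fun i => measurableSet_Ioc)]
      exact congrArg volume <| Set.image_preimage_eq_of_subset fun p hp => ⟨⟨p, hcube hp⟩, rfl⟩
    have h2 : volume (φ ⁻¹' A) = volume ((fun x : EuclideanSpace ℝ (Fin n) => L • x) ⁻¹' A) :=
      (PiLp.volume_preserving_toLp (Fin n)).measure_preimage
        ((measurable_const_smul L) hA).nullMeasurableSet
    rw [measureReal_def, h1, h2, Measure.addHaar_preimage_smul _ hL.ne', ENNReal.toReal_mul,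
      ENNReal.toReal_ofReal (by positivity), finrank_euclideanSpace, Fintype.card_fin,
      abs_of_nonneg (by positivity), measureReal_def]
    field_simp
  rw [← hvol]
  refine volume_real_sq_le_of_avoids hn hB (s := fun k => d k / L)
    (fun k => (div_pos (hd k) hL).le) ?_ hsum ?_
  · intro k ξ hξ x hx hy
    set p := (e x).1 with hp
    set q := (e (x + fun i => ((d k / L * ξ i : ℝ) : UnitAddCircle))).1 with hq
    have hxA : φ p ∈ A := hx
    have hyA : φ q ∈ A := hy
    have hcoe : ∀ w : UnitAddTorus (Fin n), ∀ i, (((e w).1 i : ℝ) : UnitAddCircle) = w i :=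
      fun w i => congrFun (e.symm_apply_apply w) i
    have hqp : ∀ i, q i = p i + d k / L * ξ i := by
      intro i
      have h0 : ((q i - p i - d k / L * ξ i : ℝ) : UnitAddCircle) = 0 := by
        rw [AddCircle.coe_sub, AddCircle.coe_sub, hq, hp, hcoe, hcoe]
        simp
      obtain ⟨j, hj⟩ := (AddCircle.coe_eq_zero_iff (1 : ℝ)).1 h0
      have hξi : |ξ i| ≤ 1 := hξ ▸ PiLp.norm_apply_le ξ i
      have h1 := abs_le.1 (hAR _ hxA i)
      have h2 := abs_le.1 (hAR _ hyA i)
      have h3 := abs_le.1 hξi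
      simp only [hφ, PiLp.smul_apply, smul_eq_mul] at h1 h2
      have hj' : L * j = L * q i - L * p i - d k * ξ i := by
        rw [zsmul_eq_mul, mul_one] at hj
        rw [hj]; field_simp
      have hdk := hd k
      have hRk := hdR k
      have hj1 : (j : ℝ) < 1 := by by_contra! hc; nlinarith
      have hj2 : (-1 : ℝ) < j := by by_contra! hc; nlinarith
      have hj0 : j = 0 := by
        have : j < 1 := by exact_mod_cast hj1
        have : -1 < j := by exact_mod_cast hj2
        omega
      rw [hj0] at hj
      simp only [zero_smul] at hj
      linarith
    refine havoid k _ hyA _ hxA ?_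
    have : φ q - φ p = d k • ξ := by
      ext i
      simp only [hφ, PiLp.sub_apply, PiLp.smul_apply, smul_eq_mul, hqp]
      field_simp
      ring
    rw [dist_eq_norm, this, norm_smul, hξ, Real.norm_of_nonneg (hd k).le, mul_one]
  · intro t ht
    have := hpos (t / L) (by positivity)
    convert this using 5
    ring

end UnitTorus

theorem main_theorem (n N : ℕ) (hn : 1 ≤ n) (d : Fin N → ℝ) (hd : ∀ k, 0 < d k)
    (A : Set (EuclideanSpace ℝ (Fin n))) (hA : MeasurableSet A)
    (havoid : ∀ k, AvoidsDistance A (d k))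
    (z₀ : ℝ) (z : Fin N → ℝ)
    (hsum : z₀ + ∑ k, z k ≥ 1)
    (hpos : ∀ t : ℝ, 0 ≤ t → z₀ + ∑ k, z k * Omega n (t * d k) ≥ 0) :
    upperDensity A ≤ z₀ := by
  obtain ⟨D, hD0, hD⟩ : ∃ D : ℝ, 0 < D ∧ ∀ k, d k ≤ D := by
    have := Finset.sum_nonneg fun k (_ : k ∈ Finset.univ) => (hd k).le
    refine ⟨1 + ∑ k, d k, by positivity, fun k => ?_⟩
    have := Finset.single_le_sum (fun k _ => (hd k).le) (Finset.mem_univ k)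
    linarith
  have hz₀ : 0 ≤ z₀ := by
    obtain ⟨ε, hε0, hε1, hε⟩ : ∃ ε : ℝ, 0 < ε ∧ ε ≤ 1 ∧ ∀ k, 2 * ε < d k := by
      have : ∀ᶠ ε in nhdsWithin (0 : ℝ) (Set.Ioi 0), ε ≤ 1 ∧ ∀ k, 2 * ε < d k := by
        apply Filter.Eventually.filter_mono nhdsWithin_le_nhds
        refine (eventually_le_nhds one_pos).and (Filter.eventually_all.2 fun k => ?_)
        filter_upwards [eventually_lt_nhds (half_pos (hd k))] with ε h
        linarith
      obtain ⟨ε, h, h0⟩ := (this.and self_mem_nhdsWithin).exists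
      exact ⟨ε, h0, h.1, h.2⟩
    have key := volume_real_sq_le_of_avoidsDistance (T := 1 + D) (R := 1) hn hd
      (A := Metric.ball (0 : EuclideanSpace ℝ (Fin n)) ε) measurableSet_ball
      (fun k x hx y hy h => by
        rw [mem_ball_zero_iff] at hx hy
        have := dist_le_norm_add_norm x y
        linarith [hε k]) (by positivity)
      (fun x hx i => ((PiLp.norm_apply_le x i).trans (mem_ball_zero_iff.1 hx).le).trans hε1)
      (fun k => by linarith [hD k]) (by linarith) hsum hpos
    have hv : 0 < volume.real (Metric.ball (0 : EuclideanSpace ℝ (Fin n)) ε) :=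
      ENNReal.toReal_pos (Metric.measure_ball_pos _ _ hε0).ne' measure_ball_lt_top.ne
    by_contra! hneg
    have h1 : 0 < volume.real (Metric.ball (0 : EuclideanSpace ℝ (Fin n)) ε) /
      (2 * (1 + D)) ^ n := by positivity
    nlinarith
  have hbound : ∀ T : ℝ, 0 < T → (volume (A ∩ {x | ∀ i, |x i| ≤ T})).toReal / (2 * T) ^ n ≤
      z₀ * ((T + D) / T) ^ n := by
    intro T hT
    have hm : MeasurableSet {x : EuclideanSpace ℝ (Fin n) | ∀ i, |x i| ≤ T} := by
      simp only [Set.ofPred_forall]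
      exact MeasurableSet.iInter fun i => measurableSet_le (by fun_prop) (by fun_prop)
    have key := volume_real_sq_le_of_avoidsDistance (T := T + D) (R := T) hn hd
      (hA.inter hm) (fun k x hx y hy => havoid k x hx.1 y hy.1) (by positivity)
      (fun x hx => hx.2) (fun k => by linarith [hD k]) (by linarith) hsum hpos
    have hle : volume.real (A ∩ {x | ∀ i, |x i| ≤ T}) / (2 * (T + D)) ^ n ≤ z₀ := by
      rw [sq] at key
      rcases (show 0 ≤ volume.real (A ∩ {x | ∀ i, |x i| ≤ T}) / (2 * (T + D)) ^ n by
        positivity).eq_or_lt with h | h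
      · rwa [← h]
      · exact le_of_mul_le_mul_right key h
    rw [← measureReal_def]
    calc _ = volume.real (A ∩ {x | ∀ i, |x i| ≤ T}) / (2 * (T + D)) ^ n * ((T + D) / T) ^ n := by
          rw [div_pow, mul_pow, mul_pow]; field_simp
      _ ≤ _ := by gcongr
  have hlim : Tendsto (fun T : ℝ => z₀ * ((T + D) / T) ^ n) atTop (nhds z₀) := by
    have h1 : Tendsto (fun T : ℝ => 1 + D / T) atTop (nhds 1) := by
      simpa using (tendsto_const_nhds (x := (1 : ℝ))).add (tendsto_const_nhds.div_atTop tendsto_id)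
    have h2 := (h1.pow n).const_mul z₀
    rw [one_pow, mul_one] at h2
    refine h2.congr' ?_
    filter_upwards [eventually_gt_atTop 0] with T hT
    rw [add_div, div_self hT.ne']
  rw [upperDensity, ← hlim.limsup_eq]
  refine limsup_le_limsup ?_ ?_ hlim.isBoundedUnder_le
  · filter_upwards [eventually_gt_atTop 0] with T hT using hbound T hT
  · refine isCoboundedUnder_le_of_eventually_le (x := 0) _ ?_
    filter_upwards [eventually_gt_atTop 0] with T hT
    positivity
end
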